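/- Let p > 1, let R > 0, let 𝓑_R = {ξ ∈ ℍⁿ : d(ξ) < R} be the Heisenberg ball and Ω = 𝓑_R \ {0}. Then for every smooth compactly supported function f on Ω, ∫_Ω |∇_H f|^p dξ ≥ ((p − 1)/p)^p · ∫_Ω (|z|^p/d^p) · (|f|^p/(R − d)^p) dξ. -/

import Mathlib

open MeasureTheory Real

noncomputable section

/-- The underlying space of the Heisenberg group `ℍⁿ = ℝⁿ × ℝⁿ × ℝ`,
with points `ξ = (x, y, t)` and `z = (x, y)`. -/
abbrev Heis (n : ℕ) : Type := (Fin n → ℝ) × (Fin n → ℝ) × ℝ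

/-- The left-invariant horizontal vector field `X_j = ∂/∂x_j + 2 y_j ∂/∂t`. -/
noncomputable def XH {n : ℕ} (j : Fin n) (f : Heis n → ℝ) (ξ : Heis n) : ℝ :=
  fderiv ℝ f ξ (Pi.single j 1, 0, 0) + 2 * ξ.2.1 j * fderiv ℝ f ξ (0, 0, 1)

/-- The left-invariant horizontal vector field `Y_j = ∂/∂y_j − 2 x_j ∂/∂t`. -/
noncomputable def YH {n : ℕ} (j : Fin n) (f : Heis n → ℝ) (ξ : Heis n) : ℝ :=
  fderiv ℝ f ξ (0, Pi.single j 1, 0) - 2 * ξ.1 j * fderiv ℝ f ξ (0, 0, 1)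

/-- The horizontal gradient `∇_H f = (X_1 f, …, X_n f, Y_1 f, …, Y_n f)`. -/
noncomputable def hGrad {n : ℕ} (f : Heis n → ℝ) (ξ : Heis n) : (Fin n → ℝ) × (Fin n → ℝ) :=
  (fun j => XH j f ξ, fun j => YH j f ξ)

/-- Euclidean length of a horizontal vector. -/
noncomputable def hNorm {n : ℕ} (v : (Fin n → ℝ) × (Fin n → ℝ)) : ℝ :=
  Real.sqrt (∑ j, v.1 j ^ 2 + ∑ j, v.2 j ^ 2)

/-- Euclidean inner product of horizontal vectors. -/
noncomputable def hDot {n : ℕ} (v w : (Fin n → ℝ) × (Fin n → ℝ)) : ℝ :=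
  ∑ j, v.1 j * w.1 j + ∑ j, v.2 j * w.2 j

/-- The horizontal divergence `div_H w = Σ_j (X_j w_j + Y_j w_{n+j})`. -/
noncomputable def hDiv {n : ℕ} (V : Heis n → (Fin n → ℝ) × (Fin n → ℝ)) (ξ : Heis n) : ℝ :=
  ∑ j, (XH j (fun η => (V η).1 j) ξ + YH j (fun η => (V η).2 j) ξ)

/-- The sub-Laplacian `Δ_H = Σ_j (X_j² + Y_j²) = div_H ∘ ∇_H`. -/
noncomputable def hLap {n : ℕ} (f : Heis n → ℝ) : Heis n → ℝ :=
  hDiv (hGrad f)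

/-- The `p`-sub-Laplacian `Δ_{H,p} f = div_H (|∇_H f|^{p−2} ∇_H f)`. -/
noncomputable def pLap {n : ℕ} (p : ℝ) (f : Heis n → ℝ) : Heis n → ℝ :=
  hDiv (fun ξ => hNorm (hGrad f ξ) ^ (p - 2) • hGrad f ξ)

/-- The Euclidean norm `|z|` of the horizontal component `z = (x, y)`. -/
noncomputable def zNorm {n : ℕ} (ξ : Heis n) : ℝ :=
  Real.sqrt (∑ j, ξ.1 j ^ 2 + ∑ j, ξ.2.1 j ^ 2)

/-- The Heisenberg gauge `d(z, t) = (|z|⁴ + t²)^{1/4}`. -/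
noncomputable def dH {n : ℕ} (ξ : Heis n) : ℝ :=
  ((∑ j, ξ.1 j ^ 2 + ∑ j, ξ.2.1 j ^ 2) ^ 2 + ξ.2.2 ^ 2) ^ (1 / 4 : ℝ)

/-- A smooth compactly supported function on `ℍⁿ \ {0}`. -/
def IsTestAwayZero {n : ℕ} (f : Heis n → ℝ) : Prop :=
  ContDiff ℝ (⊤ : ℕ∞) f ∧ HasCompactSupport f ∧ (0 : Heis n) ∉ tsupport f

/-!
Let `V` be a horizontal vector field on an open set `Ω`. Integrating `div_H (|f|^p V)`, which has
integral zero, and applying Cauchy–Schwarz and Young's inequality to `p |f|^(p-1) ⟨∇_H |f|, V⟩`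
gives
`∫_Ω (div_H V - (p - 1) |V|^(p/(p-1))) |f|^p ≤ ∫_Ω |∇_H f|^p`.
On the punctured gauge ball one would like to take
`V = c^(p-1) |z|^(p-2) d^(2-p) (R - d)^(1-p) ∇_H d` with `c = (p - 1) / p`, for which the bracket is
at least `c^p |z|^p d^(-p) (R - d)^(-p)`. This field is singular on the axis `z = 0`, so
`s^((p-2)/2)`, `s = |z|²`, is replaced by a power of `s` times a nonpositive power of `s + ε`: this
only increases the logarithmic derivative while decreasing the function itself, so the inequality
holds for every `ε > 0`, and `ε → 0` by dominated convergence.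
-/

/-! ### Horizontal calculus -/

section HorizontalCalculus

variable {n : ℕ}

lemma XH_eq_fderiv (j : Fin n) (f : Heis n → ℝ) (ξ : Heis n) :
    XH j f ξ = fderiv ℝ f ξ (Pi.single j 1, 0, 2 * ξ.2.1 j) := by
  have : ((Pi.single j 1, 0, 2 * ξ.2.1 j) : Heis n) =
      (Pi.single j 1, 0, 0) + (2 * ξ.2.1 j) • (0, 0, 1) := by simp
  rw [this, map_add, map_smul, smul_eq_mul, XH]

lemma YH_eq_fderiv (j : Fin n) (f : Heis n → ℝ) (ξ : Heis n) :
    YH j f ξ = fderiv ℝ f ξ (0, Pi.single j 1, -(2 * ξ.1 j)) := by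
  have : ((0, Pi.single j 1, -(2 * ξ.1 j)) : Heis n) =
      (0, Pi.single j 1, 0) - (2 * ξ.1 j) • (0, 0, 1) := by simp
  rw [this, map_sub, map_smul, smul_eq_mul, YH]

lemma fderiv_fst_apply (j : Fin n) (ξ v : Heis n) :
    fderiv ℝ (fun η : Heis n => η.1 j) ξ v = v.1 j :=
  DFunLike.congr_fun ((ContinuousLinearMap.proj (R := ℝ) (φ := fun _ : Fin n => ℝ) j).comp
    (ContinuousLinearMap.fst ℝ _ _)).fderiv v

lemma fderiv_snd_fst_apply (j : Fin n) (ξ v : Heis n) :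
    fderiv ℝ (fun η : Heis n => η.2.1 j) ξ v = v.2.1 j :=
  DFunLike.congr_fun ((ContinuousLinearMap.proj (R := ℝ) (φ := fun _ : Fin n => ℝ) j).comp
    ((ContinuousLinearMap.fst ℝ _ _).comp (ContinuousLinearMap.snd ℝ _ _))).fderiv v

lemma fderiv_snd_snd (ξ v : Heis n) : fderiv ℝ (fun η : Heis n => η.2.2) ξ v = v.2.2 :=
  DFunLike.congr_fun ((ContinuousLinearMap.snd ℝ _ _).comp
    (ContinuousLinearMap.snd ℝ _ _)).fderiv v

lemma hGrad_add {f g : Heis n → ℝ} {ξ : Heis n} (hf : DifferentiableAt ℝ f ξ)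
    (hg : DifferentiableAt ℝ g ξ) :
    hGrad (fun η => f η + g η) ξ = hGrad f ξ + hGrad g ξ := by
  ext j <;> simp [hGrad, XH_eq_fderiv, YH_eq_fderiv, fderiv_fun_add hf hg]

lemma hGrad_mul {f g : Heis n → ℝ} {ξ : Heis n} (hf : DifferentiableAt ℝ f ξ)
    (hg : DifferentiableAt ℝ g ξ) :
    hGrad (fun η => f η * g η) ξ = f ξ • hGrad g ξ + g ξ • hGrad f ξ := by
  ext j <;> simp [hGrad, XH_eq_fderiv, YH_eq_fderiv, fderiv_fun_mul hf hg]

lemma hGrad_comp {g : ℝ → ℝ} {g' : ℝ} {f : Heis n → ℝ} {ξ : Heis n}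
    (hg : HasDerivAt g g' (f ξ)) (hf : DifferentiableAt ℝ f ξ) :
    hGrad (fun η => g (f η)) ξ = g' • hGrad f ξ := by
  have h : fderiv ℝ (fun η => g (f η)) ξ = g' • fderiv ℝ f ξ :=
    (hg.comp_hasFDerivAt ξ hf.hasFDerivAt).fderiv
  ext j <;> simp [hGrad, XH_eq_fderiv, YH_eq_fderiv, h]

lemma hGrad_eq_zero_of_notMem_tsupport {f : Heis n → ℝ} {ξ : Heis n} (h : ξ ∉ tsupport f) :
    hGrad f ξ = 0 := by
  have : fderiv ℝ f ξ = 0 := by simpa using (notMem_tsupport_iff_eventuallyEq.1 h).fderiv_eq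
  ext j <;> simp [hGrad, XH, YH, this]

lemma hDot_comm (v w : (Fin n → ℝ) × (Fin n → ℝ)) : hDot v w = hDot w v := by
  simp only [hDot, mul_comm]

lemma hDot_add_left (u v w : (Fin n → ℝ) × (Fin n → ℝ)) :
    hDot (u + v) w = hDot u w + hDot v w := by
  simp only [hDot, Prod.fst_add, Prod.snd_add, Pi.add_apply, add_mul, Finset.sum_add_distrib]
  ring

lemma hDot_smul_left (c : ℝ) (v w : (Fin n → ℝ) × (Fin n → ℝ)) :
    hDot (c • v) w = c * hDot v w := by
  simp only [hDot, Prod.smul_fst, Prod.smul_snd, Pi.smul_apply, smul_eq_mul, mul_assoc,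
    ← Finset.mul_sum, mul_add]

lemma hNorm_nonneg (v : (Fin n → ℝ) × (Fin n → ℝ)) : 0 ≤ hNorm v := Real.sqrt_nonneg _

lemma hNorm_zero : hNorm (0 : (Fin n → ℝ) × (Fin n → ℝ)) = 0 := by simp [hNorm]

lemma hDot_self (v : (Fin n → ℝ) × (Fin n → ℝ)) : hDot v v = hNorm v ^ 2 := by
  rw [hNorm, Real.sq_sqrt (by positivity)]
  simp only [hDot, sq]

lemma hNorm_smul (c : ℝ) (v : (Fin n → ℝ) × (Fin n → ℝ)) :
    hNorm (c • v) = |c| * hNorm v := by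
  simp only [hNorm, Prod.smul_fst, Prod.smul_snd, Pi.smul_apply, smul_eq_mul, mul_pow,
    ← Finset.mul_sum, ← mul_add]
  rw [Real.sqrt_mul (sq_nonneg c), Real.sqrt_sq_eq_abs]

lemma neg_hNorm_mul_hNorm_le_hDot (v w : (Fin n → ℝ) × (Fin n → ℝ)) :
    -(hNorm v * hNorm w) ≤ hDot v w := by
  have h := Real.sum_mul_le_sqrt_mul_sqrt Finset.univ
    (Sum.elim (-v.1) (-v.2)) (Sum.elim w.1 w.2)
  simp only [Fintype.sum_sum_type, Sum.elim_inl, Sum.elim_inr, Pi.neg_apply, neg_sq, neg_mul,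
    Finset.sum_neg_distrib] at h
  rw [hNorm, hNorm, hDot]
  linarith

lemma hDiv_add {V W : Heis n → (Fin n → ℝ) × (Fin n → ℝ)} {ξ : Heis n}
    (hV : DifferentiableAt ℝ V ξ) (hW : DifferentiableAt ℝ W ξ) :
    hDiv (fun η => V η + W η) ξ = hDiv V ξ + hDiv W ξ := by
  have hX {U : Heis n → (Fin n → ℝ) × (Fin n → ℝ)} (hU : DifferentiableAt ℝ U ξ) (j : Fin n) :
      DifferentiableAt ℝ (fun η => (U η).1 j) ξ := by fun_prop
  have hY {U : Heis n → (Fin n → ℝ) × (Fin n → ℝ)} (hU : DifferentiableAt ℝ U ξ) (j : Fin n) :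
      DifferentiableAt ℝ (fun η => (U η).2 j) ξ := by fun_prop
  simp only [hDiv, XH_eq_fderiv, YH_eq_fderiv, Prod.fst_add, Prod.snd_add, Pi.add_apply,
    fderiv_fun_add (hX hV _) (hX hW _), fderiv_fun_add (hY hV _) (hY hW _), _root_.add_apply,
    ← Finset.sum_add_distrib]
  exact Finset.sum_congr rfl fun j _ => by ring

lemma hDiv_smul {φ : Heis n → ℝ} {V : Heis n → (Fin n → ℝ) × (Fin n → ℝ)} {ξ : Heis n}
    (hφ : DifferentiableAt ℝ φ ξ) (hV : DifferentiableAt ℝ V ξ) :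
    hDiv (fun η => φ η • V η) ξ = hDot (hGrad φ ξ) (V ξ) + φ ξ * hDiv V ξ := by
  have hX (j : Fin n) : DifferentiableAt ℝ (fun η => (V η).1 j) ξ := by fun_prop
  have hY (j : Fin n) : DifferentiableAt ℝ (fun η => (V η).2 j) ξ := by fun_prop
  simp only [hDiv, hDot, hGrad, XH_eq_fderiv, YH_eq_fderiv, Prod.smul_fst, Prod.smul_snd,
    Pi.smul_apply, smul_eq_mul, fderiv_fun_mul hφ (hX _), fderiv_fun_mul hφ (hY _),
    _root_.add_apply, _root_.smul_apply, Finset.mul_sum,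
    ← Finset.sum_add_distrib]
  exact Finset.sum_congr rfl fun j _ => by ring

lemma hDiv_eq_zero_of_notMem_tsupport {V : Heis n → (Fin n → ℝ) × (Fin n → ℝ)} {ξ : Heis n}
    (h : ξ ∉ tsupport V) : hDiv V ξ = 0 := by
  have hX (j : Fin n) : (fun η => (V η).1 j) =ᶠ[nhds ξ] fun _ => 0 := by
    filter_upwards [notMem_tsupport_iff_eventuallyEq.1 h] with η hη using by simp [hη]
  have hY (j : Fin n) : (fun η => (V η).2 j) =ᶠ[nhds ξ] fun _ => 0 := by
    filter_upwards [notMem_tsupport_iff_eventuallyEq.1 h] with η hη using by simp [hη]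
  simp [hDiv, XH, YH, (hX _).fderiv_eq, (hY _).fderiv_eq]

lemma continuous_hGrad {f : Heis n → ℝ} (hf : ContDiff ℝ 1 f) : Continuous (hGrad f) := by
  have := hf.continuous_fderiv one_ne_zero
  unfold hGrad XH YH
  fun_prop

lemma continuous_hNorm : Continuous (hNorm : (Fin n → ℝ) × (Fin n → ℝ) → ℝ) := by
  unfold hNorm
  fun_prop

end HorizontalCalculus

/-! ### The divergence theorem -/

section DivergenceTheorem

lemma integral_fderiv_add_mul_fderiv_eq_zero {E : Type*} [NormedAddCommGroup E] [NormedSpace ℝ E]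
    [FiniteDimensional ℝ E] [MeasurableSpace E] [BorelSpace E] (μ : Measure E) [μ.IsAddHaarMeasure]
    {u v : E} {b g : E → ℝ} (hb : ContDiff ℝ 1 b) (hbv : ∀ x, fderiv ℝ b x v = 0)
    (hg : ContDiff ℝ 1 g) (hgc : HasCompactSupport g) :
    ∫ x, (fderiv ℝ g x u + b x * fderiv ℝ g x v) ∂μ = 0 := by
  have hg' (w : E) : Continuous fun x => fderiv ℝ g x w :=
    (hg.continuous_fderiv one_ne_zero).clm_apply continuous_const
  have hgc' (w : E) : HasCompactSupport fun x => fderiv ℝ g x w := hgc.fderiv_apply ℝ w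
  have of_const_along {a : E → ℝ} {w : E} (ha : ContDiff ℝ 1 a) (haw : ∀ x, fderiv ℝ a x w = 0) :
      Integrable (fun x => a x * fderiv ℝ g x w) μ ∧ ∫ x, a x * fderiv ℝ g x w ∂μ = 0 := by
    have hag' : Integrable (fun x => a x * fderiv ℝ g x w) μ :=
      (ha.continuous.mul (hg' w)).integrable_of_hasCompactSupport (hgc' w).mul_left
    have hag : Integrable (fun x => a x * g x) μ :=
      (ha.continuous.mul hg.continuous).integrable_of_hasCompactSupport hgc.mul_left
    refine ⟨hag', ?_⟩
    rw [integral_mul_fderiv_eq_neg_fderiv_mul_of_integrable (by simp [haw]) hag' hag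
      (fun x _ => ha.differentiable one_ne_zero x) (fun x _ => hg.differentiable one_ne_zero x)]
    simp [haw]
  obtain ⟨hu, hu0⟩ := of_const_along (a := fun _ => 1) (w := u) contDiff_const (by simp)
  obtain ⟨hv, hv0⟩ := of_const_along hb hbv
  simp only [one_mul] at hu hu0
  rw [integral_add hu hv, hu0, hv0, add_zero]

variable {n : ℕ}

instance instIsAddHaarMeasureHeis : (volume : Measure (Heis n)).IsAddHaarMeasure :=
  have : (volume : Measure ((Fin n → ℝ) × ℝ)).IsAddHaarMeasure :=
    Measure.prod.instIsAddHaarMeasure _ _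
  Measure.prod.instIsAddHaarMeasure _ _

lemma integrable_XH (j : Fin n) {g : Heis n → ℝ} (hg : ContDiff ℝ 1 g)
    (hgc : HasCompactSupport g) : Integrable (XH j g) := by
  have := hg.continuous_fderiv one_ne_zero
  refine Continuous.integrable_of_hasCompactSupport (by unfold XH; fun_prop) ?_
  exact (hgc.fderiv_apply ℝ _).add (hgc.fderiv_apply ℝ _).mul_left

lemma integrable_YH (j : Fin n) {g : Heis n → ℝ} (hg : ContDiff ℝ 1 g)
    (hgc : HasCompactSupport g) : Integrable (YH j g) := by
  have := hg.continuous_fderiv one_ne_zero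
  refine Continuous.integrable_of_hasCompactSupport (by unfold YH; fun_prop) ?_
  exact (hgc.fderiv_apply ℝ _).sub (hgc.fderiv_apply ℝ _).mul_left

lemma integral_XH_eq_zero (j : Fin n) {g : Heis n → ℝ} (hg : ContDiff ℝ 1 g)
    (hgc : HasCompactSupport g) : ∫ ξ, XH j g ξ = 0 := by
  refine integral_fderiv_add_mul_fderiv_eq_zero volume (by fun_prop) (fun ξ => ?_) hg hgc
  rw [fderiv_const_mul (by fun_prop), _root_.smul_apply, fderiv_snd_fst_apply]
  simp

lemma integral_YH_eq_zero (j : Fin n) {g : Heis n → ℝ} (hg : ContDiff ℝ 1 g)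
    (hgc : HasCompactSupport g) : ∫ ξ, YH j g ξ = 0 := by
  simp only [YH, sub_eq_add_neg, ← neg_mul]
  refine integral_fderiv_add_mul_fderiv_eq_zero volume (by fun_prop) (fun ξ => ?_) hg hgc
  rw [fderiv_const_mul (by fun_prop), _root_.smul_apply, fderiv_fst_apply]
  simp

variable {V : Heis n → (Fin n → ℝ) × (Fin n → ℝ)}

lemma hasCompactSupport_fst_apply (hVc : HasCompactSupport V) (j : Fin n) :
    HasCompactSupport fun ξ => (V ξ).1 j :=
  hVc.comp_left (g := fun v : (Fin n → ℝ) × (Fin n → ℝ) => v.1 j) rfl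

lemma hasCompactSupport_snd_apply (hVc : HasCompactSupport V) (j : Fin n) :
    HasCompactSupport fun ξ => (V ξ).2 j :=
  hVc.comp_left (g := fun v : (Fin n → ℝ) × (Fin n → ℝ) => v.2 j) rfl

lemma integrable_XH_add_YH (hV : ContDiff ℝ 1 V) (hVc : HasCompactSupport V) (j : Fin n) :
    Integrable fun ξ => XH j (fun η => (V η).1 j) ξ + YH j (fun η => (V η).2 j) ξ :=
  (integrable_XH j (by fun_prop) (hasCompactSupport_fst_apply hVc j)).add
    (integrable_YH j (by fun_prop) (hasCompactSupport_snd_apply hVc j))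

lemma integrable_hDiv (hV : ContDiff ℝ 1 V) (hVc : HasCompactSupport V) :
    Integrable (hDiv V) :=
  integrable_finsetSum _ fun j _ => integrable_XH_add_YH hV hVc j

theorem integral_hDiv_eq_zero (hV : ContDiff ℝ 1 V) (hVc : HasCompactSupport V) :
    ∫ ξ, hDiv V ξ = 0 := by
  have hX (j : Fin n) : ContDiff ℝ 1 fun ξ => (V ξ).1 j := by fun_prop
  have hY (j : Fin n) : ContDiff ℝ 1 fun ξ => (V ξ).2 j := by fun_prop
  have hXc := hasCompactSupport_fst_apply hVc
  have hYc := hasCompactSupport_snd_apply hVc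
  refine (integral_finsetSum _ fun j _ => integrable_XH_add_YH hV hVc j).trans ?_
  refine Finset.sum_eq_zero fun j _ => ?_
  rw [integral_add (integrable_XH j (hX j) (hXc j)) (integrable_YH j (hY j) (hYc j)),
    integral_XH_eq_zero j (hX j) (hXc j), integral_YH_eq_zero j (hY j) (hYc j), add_zero]

end DivergenceTheorem

/-! ### Hardy inequalities from horizontal vector fields -/

section HardyOfVectorField

variable {p : ℝ}

lemma young_mul_rpow_le (hp : 1 < p) {a b s : ℝ} (ha : 0 ≤ a) (hb : 0 ≤ b)
    (hs : 0 ≤ s) :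
    p * s ^ (p - 1) * a * b ≤ a ^ p + (p - 1) * b ^ (p / (p - 1)) * s ^ p := by
  have hp1 : 0 < p - 1 := by linarith
  have hs' : (s ^ (p - 1)) ^ (p / (p - 1)) = s ^ p := by
    rw [← Real.rpow_mul hs]; congr 1; field_simp
  have h := Real.young_inequality_of_nonneg ha (mul_nonneg (Real.rpow_nonneg hs (p - 1)) hb)
    (Real.HolderConjugate.conjExponent hp)
  rw [Real.conjExponent, Real.mul_rpow (by positivity) hb, hs'] at h
  field_simp at h
  linarith

lemma abs_mul_abs_rpow_mul (hp : 1 < p) (x : ℝ) :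
    |p * |x| ^ (p - 2) * x| = p * |x| ^ (p - 1) := by
  rw [abs_mul, abs_of_nonneg (by positivity), mul_assoc]
  congr 1
  rcases eq_or_ne x 0 with rfl | hx
  · simp [Real.zero_rpow (by linarith : p - 1 ≠ 0)]
  · rw [← Real.rpow_add_one (abs_ne_zero.2 hx)]; congr 1; ring

lemma integrable_mul_abs_rpow {E : Type*} [TopologicalSpace E] [MeasurableSpace E]
    [OpensMeasurableSpace E] {μ : Measure E} [IsFiniteMeasureOnCompacts μ] (hp : 0 < p) {Ω : Set E}
    (hΩ : IsOpen Ω) {w f : E → ℝ} (hw : ContinuousOn w Ω) (hf : Continuous f)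
    (hfc : HasCompactSupport f) (hfs : tsupport f ⊆ Ω) :
    Integrable (fun x => w x * |f x| ^ p) μ := by
  have hfp : Function.support (fun x => w x * |f x| ^ p) ⊆ Function.support f := fun x hx hfx => by
    simp [hfx, hp.ne'] at hx
  have hcont : ContinuousOn (fun x => w x * |f x| ^ p) Ω :=
    hw.mul (hf.abs.rpow_const fun _ => Or.inr hp.le).continuousOn
  exact (hcont.continuous_of_tsupport_subset hΩ
    ((closure_mono hfp).trans hfs)).integrable_of_hasCompactSupport (hfc.mono hfp)

lemma contDiff_abs_rpow_smul {E F : Type*} [NormedAddCommGroup E] [NormedSpace ℝ E]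
    [NormedAddCommGroup F] [NormedSpace ℝ F] (hp : 1 < p) {Ω : Set E} (hΩ : IsOpen Ω)
    {f : E → ℝ} {V : E → F} (hf : ContDiff ℝ 1 f) (hfs : tsupport f ⊆ Ω)
    (hV : ContDiffOn ℝ 1 V Ω) : ContDiff ℝ 1 fun x => |f x| ^ p • V x := by
  refine contDiff_iff_contDiffAt.2 fun x => ?_
  by_cases hx : x ∈ tsupport f
  · exact (hf.norm_rpow hp).contDiffAt.smul (hV.contDiffAt (hΩ.mem_nhds (hfs hx)))
  · refine contDiffAt_const (c := (0 : F)) |>.congr_of_eventuallyEq ?_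
    filter_upwards [notMem_tsupport_iff_eventuallyEq.1 hx] with y hy
    simp [hy, Real.zero_rpow (by linarith : p ≠ 0)]

variable {n : ℕ}

lemma hGrad_abs_rpow (hp : 1 < p) {f : Heis n → ℝ} {ξ : Heis n} (hf : DifferentiableAt ℝ f ξ) :
    hGrad (fun η => |f η| ^ p) ξ = (p * |f ξ| ^ (p - 2) * f ξ) • hGrad f ξ :=
  hGrad_comp (g := fun x => |x| ^ p) (hasDerivAt_abs_rpow _ hp) hf

lemma hDiv_sub_mul_abs_rpow_le (hp : 1 < p) {f : Heis n → ℝ}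
    {V : Heis n → (Fin n → ℝ) × (Fin n → ℝ)} {ξ : Heis n} (hf : DifferentiableAt ℝ f ξ)
    (hV : DifferentiableAt ℝ V ξ) :
    (hDiv V ξ - (p - 1) * hNorm (V ξ) ^ (p / (p - 1))) * |f ξ| ^ p ≤
      hNorm (hGrad f ξ) ^ p + hDiv (fun η => |f η| ^ p • V η) ξ := by
  have hfp : DifferentiableAt ℝ (fun η => |f η| ^ p) ξ :=
    (hasDerivAt_abs_rpow (f ξ) hp).differentiableAt.comp ξ hf
  have hdot := neg_hNorm_mul_hNorm_le_hDot ((p * |f ξ| ^ (p - 2) * f ξ) • hGrad f ξ) (V ξ)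
  rw [hNorm_smul, abs_mul_abs_rpow_mul hp] at hdot
  have hyoung := young_mul_rpow_le hp (hNorm_nonneg (hGrad f ξ)) (hNorm_nonneg (V ξ))
    (abs_nonneg (f ξ))
  rw [hDiv_smul hfp hV, hGrad_abs_rpow hp hf]
  linarith

lemma integrable_hNorm_hGrad_rpow (hp : 0 < p) {f : Heis n → ℝ} (hf : ContDiff ℝ 1 f)
    (hfc : HasCompactSupport f) : Integrable fun ξ => hNorm (hGrad f ξ) ^ p := by
  refine ((continuous_hNorm.comp (continuous_hGrad hf)).rpow_const
    fun _ => Or.inr hp.le).integrable_of_hasCompactSupport (hfc.mono' fun ξ hξ => ?_)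
  by_contra h
  simp [hGrad_eq_zero_of_notMem_tsupport h, hNorm_zero, Real.zero_rpow hp.ne'] at hξ

theorem integral_mul_abs_rpow_le_of_le_hDiv_sub (hp : 1 < p) {Ω : Set (Heis n)} (hΩ : IsOpen Ω)
    {V : Heis n → (Fin n → ℝ) × (Fin n → ℝ)} (hV : ContDiffOn ℝ 1 V Ω) {w : Heis n → ℝ}
    (hw : ContinuousOn w Ω)
    (hwV : ∀ ξ ∈ Ω, w ξ ≤ hDiv V ξ - (p - 1) * hNorm (V ξ) ^ (p / (p - 1)))
    {f : Heis n → ℝ} (hf : ContDiff ℝ 1 f) (hfc : HasCompactSupport f) (hfs : tsupport f ⊆ Ω) :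
    ∫ ξ in Ω, w ξ * |f ξ| ^ p ≤ ∫ ξ in Ω, hNorm (hGrad f ξ) ^ p := by
  have hp0 : 0 < p := by linarith
  set U : Heis n → (Fin n → ℝ) × (Fin n → ℝ) := fun η => |f η| ^ p • V η with hU
  have hU1 : ContDiff ℝ 1 U := contDiff_abs_rpow_smul hp hΩ hf hfs hV
  have hUf : Function.support U ⊆ Function.support f := fun ξ hξ hfξ => by
    simp [hU, hfξ, Real.zero_rpow hp0.ne'] at hξ
  have hUc : HasCompactSupport U := hfc.mono hUf
  have hUΩ : tsupport U ⊆ Ω := (closure_mono hUf).trans hfs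
  have hgradi := integrable_hNorm_hGrad_rpow hp0 hf hfc
  calc ∫ ξ in Ω, w ξ * |f ξ| ^ p
      ≤ ∫ ξ in Ω, (hNorm (hGrad f ξ) ^ p + hDiv U ξ) := by
        refine setIntegral_mono_on
          (integrable_mul_abs_rpow hp0 hΩ hw hf.continuous hfc hfs).integrableOn
          (hgradi.add (integrable_hDiv hU1 hUc)).integrableOn hΩ.measurableSet fun ξ hξ => ?_
        refine (mul_le_mul_of_nonneg_right (hwV ξ hξ) (by positivity)).trans ?_
        exact hDiv_sub_mul_abs_rpow_le hp (hf.differentiable one_ne_zero ξ)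
          ((hV.contDiffAt (hΩ.mem_nhds hξ)).differentiableAt one_ne_zero)
    _ = (∫ ξ in Ω, hNorm (hGrad f ξ) ^ p) + ∫ ξ in Ω, hDiv U ξ :=
        integral_add hgradi.integrableOn (integrable_hDiv hU1 hUc).integrableOn
    _ = ∫ ξ in Ω, hNorm (hGrad f ξ) ^ p := by
        rw [setIntegral_eq_integral_of_forall_compl_eq_zero fun ξ hξ =>
          hDiv_eq_zero_of_notMem_tsupport fun h => hξ (hUΩ h), integral_hDiv_eq_zero hU1 hUc,
          add_zero]

end HardyOfVectorField

/-! ### Geometry of the gauge -/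

section Gauge

variable {n : ℕ}

/-- The horizontal vector `z = (x, y)`, whose Euclidean length is `zNorm`. -/
def zVec (ξ : Heis n) : (Fin n → ℝ) × (Fin n → ℝ) := (ξ.1, ξ.2.1)

/-- The rotated horizontal vector `(y, -x)`, which is half the horizontal gradient of `t`. -/
def zRot (ξ : Heis n) : (Fin n → ℝ) × (Fin n → ℝ) := (ξ.2.1, -ξ.1)

/-- The field `|z|² z + t (y, -x) = ¼ ∇_H d⁴ = d³ ∇_H d`; unlike `∇_H d` it is smooth at `0`. -/
def gaugeField (ξ : Heis n) : (Fin n → ℝ) × (Fin n → ℝ) :=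
  zNorm ξ ^ 2 • zVec ξ + ξ.2.2 • zRot ξ

lemma contDiff_zVec {m : WithTop ℕ∞} : ContDiff ℝ m (zVec : Heis n → _) := by
  unfold zVec
  fun_prop

lemma contDiff_zRot {m : WithTop ℕ∞} : ContDiff ℝ m (zRot : Heis n → _) := by
  unfold zRot
  fun_prop

lemma zNorm_sq (ξ : Heis n) : zNorm ξ ^ 2 = ∑ j, ξ.1 j ^ 2 + ∑ j, ξ.2.1 j ^ 2 :=
  Real.sq_sqrt (by positivity)

lemma zNorm_nonneg (ξ : Heis n) : 0 ≤ zNorm ξ := Real.sqrt_nonneg _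

lemma continuous_zNorm : Continuous (zNorm : Heis n → ℝ) := by
  unfold zNorm
  fun_prop

lemma contDiff_zNorm_sq {m : WithTop ℕ∞} : ContDiff ℝ m fun ξ : Heis n => zNorm ξ ^ 2 := by
  simp only [zNorm_sq]
  fun_prop

lemma contDiff_gaugeField {m : WithTop ℕ∞} : ContDiff ℝ m (gaugeField : Heis n → _) :=
  (contDiff_zNorm_sq.smul contDiff_zVec).add (contDiff_snd.snd.smul contDiff_zRot)

lemma hDot_zVec_zVec (ξ : Heis n) : hDot (zVec ξ) (zVec ξ) = zNorm ξ ^ 2 := hDot_self (zVec ξ)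

lemma hDot_zVec_zRot (ξ : Heis n) : hDot (zVec ξ) (zRot ξ) = 0 := by
  simp [hDot, zVec, zRot, mul_comm]

lemma hDot_zRot_zRot (ξ : Heis n) : hDot (zRot ξ) (zRot ξ) = zNorm ξ ^ 2 := by
  simp [hDot, zRot, zNorm_sq, ← sq, add_comm]

lemma hDot_zVec_gaugeField (ξ : Heis n) : hDot (zVec ξ) (gaugeField ξ) = zNorm ξ ^ 4 := by
  rw [hDot_comm, gaugeField, hDot_add_left, hDot_smul_left, hDot_smul_left, hDot_zVec_zVec,
    hDot_comm, hDot_zVec_zRot]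
  ring

lemma hDot_zRot_gaugeField (ξ : Heis n) :
    hDot (zRot ξ) (gaugeField ξ) = ξ.2.2 * zNorm ξ ^ 2 := by
  rw [hDot_comm, gaugeField, hDot_add_left, hDot_smul_left, hDot_smul_left, hDot_zVec_zRot,
    hDot_zRot_zRot]
  ring

lemma dH_nonneg (ξ : Heis n) : 0 ≤ dH ξ := Real.rpow_nonneg (by positivity) _

lemma dH_pow_four (ξ : Heis n) : dH ξ ^ 4 = zNorm ξ ^ 4 + ξ.2.2 ^ 2 := by
  rw [dH, ← Real.rpow_mul_natCast (by positivity), ← zNorm_sq]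
  norm_num [← pow_mul]

lemma zNorm_eq_zero {ξ : Heis n} : zNorm ξ = 0 ↔ ξ.1 = 0 ∧ ξ.2.1 = 0 := by
  rw [← sq_eq_zero_iff, zNorm_sq, add_eq_zero_iff_of_nonneg (by positivity) (by positivity),
    Finset.sum_eq_zero_iff_of_nonneg (fun _ _ => sq_nonneg _),
    Finset.sum_eq_zero_iff_of_nonneg (fun _ _ => sq_nonneg _)]
  simp [funext_iff]

lemma dH_pos {ξ : Heis n} (hξ : ξ ≠ 0) : 0 < dH ξ := by
  refine (dH_nonneg ξ).lt_of_ne' fun h => hξ ?_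
  have h4 := dH_pow_four ξ
  rw [h, zero_pow four_ne_zero] at h4
  have ht : ξ.2.2 = 0 := by nlinarith [pow_nonneg (zNorm_nonneg ξ) 4, sq_nonneg ξ.2.2]
  have hz : zNorm ξ = 0 := by rw [ht] at h4; simpa using h4.symm
  exact Prod.ext (zNorm_eq_zero.1 hz).1 (Prod.ext (zNorm_eq_zero.1 hz).2 ht)

lemma continuous_dH : Continuous (dH : Heis n → ℝ) :=
  Continuous.rpow_const (by fun_prop) fun _ => Or.inr (by norm_num)

lemma contDiffAt_dH {m : WithTop ℕ∞} {ξ : Heis n} (hξ : ξ ≠ 0) : ContDiffAt ℝ m dH ξ := by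
  refine ContDiffAt.rpow_const_of_ne (by fun_prop) ?_
  rw [← zNorm_sq, ← pow_mul, ← dH_pow_four]
  exact (pow_pos (dH_pos hξ) 4).ne'

lemma hNorm_gaugeField (ξ : Heis n) : hNorm (gaugeField ξ) = zNorm ξ * dH ξ ^ 2 := by
  rw [← sq_eq_sq₀ (hNorm_nonneg _) (mul_nonneg (zNorm_nonneg ξ) (sq_nonneg _))]
  calc hNorm (gaugeField ξ) ^ 2
      = zNorm ξ ^ 2 * hDot (zVec ξ) (gaugeField ξ) +
          ξ.2.2 * hDot (zRot ξ) (gaugeField ξ) := by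
        rw [← hDot_smul_left, ← hDot_smul_left, ← hDot_add_left, ← hDot_self, ← gaugeField]
    _ = (zNorm ξ * dH ξ ^ 2) ^ 2 := by
        rw [hDot_zVec_gaugeField, hDot_zRot_gaugeField]
        linear_combination -zNorm ξ ^ 2 * dH_pow_four ξ

lemma fderiv_zNorm_sq (ξ v : Heis n) :
    fderiv ℝ (fun η => zNorm η ^ 2) ξ v = 2 * hDot (zVec ξ) (zVec v) := by
  simp only [zNorm_sq]
  rw [fderiv_fun_add (by fun_prop) (by fun_prop), fderiv_fun_sum fun j _ => by fun_prop,
    fderiv_fun_sum fun j _ => by fun_prop]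
  have hx (j : Fin n) : fderiv ℝ (fun η : Heis n => η.1 j ^ 2) ξ v = 2 * (ξ.1 j * v.1 j) := by
    rw [fderiv_fun_pow 2 (by fun_prop), _root_.smul_apply, fderiv_fst_apply]
    simp [mul_assoc]
  have hy (j : Fin n) :
      fderiv ℝ (fun η : Heis n => η.2.1 j ^ 2) ξ v = 2 * (ξ.2.1 j * v.2.1 j) := by
    rw [fderiv_fun_pow 2 (by fun_prop), _root_.smul_apply, fderiv_snd_fst_apply]
    simp [mul_assoc]
  simp [hDot, zVec, hx, hy, mul_add, Finset.mul_sum]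

lemma hGrad_zNorm_sq (ξ : Heis n) : hGrad (fun η => zNorm η ^ 2) ξ = (2 : ℝ) • zVec ξ := by
  ext j <;> simp [hGrad, XH_eq_fderiv, YH_eq_fderiv, fderiv_zNorm_sq, hDot, zVec, Pi.single_apply]

lemma hGrad_snd_snd (ξ : Heis n) : hGrad (fun η => η.2.2) ξ = (2 : ℝ) • zRot ξ := by
  ext j <;> simp [hGrad, zRot, XH_eq_fderiv, YH_eq_fderiv, fderiv_snd_snd]

lemma hGrad_dH_pow_four (ξ : Heis n) :
    hGrad (fun η => dH η ^ 4) ξ = (4 : ℝ) • gaugeField ξ := by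
  have hz : DifferentiableAt ℝ (fun η : Heis n => zNorm η ^ 2) ξ :=
    contDiff_zNorm_sq.differentiable one_ne_zero ξ
  have ht : DifferentiableAt ℝ (fun η : Heis n => η.2.2) ξ := by fun_prop
  have h (η : Heis n) : dH η ^ 4 = zNorm η ^ 2 * zNorm η ^ 2 + η.2.2 * η.2.2 := by
    rw [dH_pow_four]; ring
  simp only [h]
  rw [hGrad_add (hz.fun_mul hz) (ht.fun_mul ht), hGrad_mul hz hz, hGrad_mul ht ht,
    hGrad_zNorm_sq, hGrad_snd_snd, gaugeField]
  module

lemma hGrad_dH {ξ : Heis n} (hξ : ξ ≠ 0) : hGrad dH ξ = (dH ξ ^ 3)⁻¹ • gaugeField ξ := by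
  have hd : DifferentiableAt ℝ dH ξ := (contDiffAt_dH hξ).differentiableAt one_ne_zero
  have h : (4 * dH ξ ^ 3) • hGrad dH ξ = (4 : ℝ) • gaugeField ξ := by
    rw [← hGrad_dH_pow_four, hGrad_comp (g := fun r => r ^ 4) (hasDerivAt_pow 4 _) hd]
    norm_num
  rw [mul_smul] at h
  rw [← smul_right_injective _ (four_ne_zero' ℝ) h, inv_smul_smul₀ (pow_pos (dH_pos hξ) 3).ne']

lemma hDot_hGrad_dH_gaugeField {ξ : Heis n} (hξ : ξ ≠ 0) :
    hDot (hGrad dH ξ) (gaugeField ξ) = zNorm ξ ^ 2 * dH ξ := by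
  have := dH_pos hξ
  rw [hGrad_dH hξ, hDot_smul_left, hDot_self, hNorm_gaugeField]
  field_simp

lemma hDiv_zVec (ξ : Heis n) : hDiv zVec ξ = 2 * n := by
  simp only [hDiv, zVec, XH_eq_fderiv, YH_eq_fderiv, fderiv_fst_apply, fderiv_snd_fst_apply,
    Pi.single_eq_same, Finset.sum_const, Finset.card_univ, Fintype.card_fin, nsmul_eq_mul]
  ring

lemma hDiv_zRot (ξ : Heis n) : hDiv zRot ξ = 0 := by
  simp [hDiv, zRot, XH_eq_fderiv, YH_eq_fderiv, fderiv_fst_apply, fderiv_snd_fst_apply]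

lemma hDiv_gaugeField (ξ : Heis n) : hDiv gaugeField ξ = (2 * n + 4) * zNorm ξ ^ 2 := by
  have hz : DifferentiableAt ℝ (zVec : Heis n → _) ξ :=
    contDiff_zVec.differentiable one_ne_zero ξ
  have hr : DifferentiableAt ℝ (zRot : Heis n → _) ξ :=
    contDiff_zRot.differentiable one_ne_zero ξ
  have hz2 : DifferentiableAt ℝ (fun η : Heis n => zNorm η ^ 2) ξ :=
    contDiff_zNorm_sq.differentiable one_ne_zero ξ
  have ht : DifferentiableAt ℝ (fun η : Heis n => η.2.2) ξ := by fun_prop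
  change hDiv (fun η => zNorm η ^ 2 • zVec η + η.2.2 • zRot η) ξ = _
  rw [hDiv_add (hz2.fun_smul hz) (ht.fun_smul hr), hDiv_smul hz2 hz, hDiv_smul ht hr,
    hGrad_zNorm_sq, hGrad_snd_snd, hDot_smul_left, hDot_smul_left, hDot_zVec_zVec,
    hDot_zRot_zRot, hDiv_zVec, hDiv_zRot]
  ring

lemma hDiv_radial_smul_gaugeField {A G : ℝ → ℝ} {A' G' : ℝ} {ξ : Heis n} (hξ : ξ ≠ 0)
    (hA : HasDerivAt A A' (zNorm ξ ^ 2)) (hG : HasDerivAt G G' (dH ξ)) :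
    hDiv (fun η => (A (zNorm η ^ 2) * G (dH η)) • gaugeField η) ξ =
      zNorm ξ ^ 2 * (2 * (zNorm ξ ^ 2 * A') * G (dH ξ) + A (zNorm ξ ^ 2) * (dH ξ * G') +
        (2 * n + 4) * (A (zNorm ξ ^ 2) * G (dH ξ))) := by
  have hz : DifferentiableAt ℝ (fun η : Heis n => zNorm η ^ 2) ξ :=
    contDiff_zNorm_sq.differentiable one_ne_zero ξ
  have hd : DifferentiableAt ℝ dH ξ := (contDiffAt_dH hξ).differentiableAt one_ne_zero
  have hAz : DifferentiableAt ℝ (fun η : Heis n => A (zNorm η ^ 2)) ξ :=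
    hA.differentiableAt.fun_comp' ξ hz
  have hGd : DifferentiableAt ℝ (fun η : Heis n => G (dH η)) ξ :=
    hG.differentiableAt.fun_comp' ξ hd
  rw [hDiv_smul (hAz.fun_mul hGd) (contDiff_gaugeField.differentiable one_ne_zero ξ),
    hGrad_mul hAz hGd, hGrad_comp hA hz, hGrad_comp hG hd, hDot_add_left]
  simp only [hDot_smul_left]
  rw [hGrad_zNorm_sq, hDot_smul_left, hDot_zVec_gaugeField, hDot_hGrad_dH_gaugeField hξ,
    hDiv_gaugeField]
  ring

end Gauge

/-! ### Radial profiles -/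

section Profiles

/-- A regularization of `s ^ q` that is smooth on `[0, ∞)` when `ε > 0`. The natural number `⌈q⌉₊`
makes the exponent of `s + ε` nonpositive, so that the logarithmic derivative of the
regularization is at least that of `s ^ q`. -/
def regPow (q ε s : ℝ) : ℝ := s ^ ⌈q⌉₊ * (s + ε) ^ (q - ⌈q⌉₊)

/-- The profile in `dH` of the vector field for the Hardy inequality on the ball of radius `R`. -/
def gaugeWeight (p R r : ℝ) : ℝ :=
  ((p - 1) / p) ^ (p - 1) * r ^ (-1 - p) * (R - r) ^ (1 - p)

variable {q ε s p R r z : ℝ}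

lemma regPow_nonneg (hε : 0 ≤ ε) (hs : 0 ≤ s) : 0 ≤ regPow q ε s := by
  unfold regPow
  positivity

lemma contDiffAt_regPow {m : WithTop ℕ∞} (hε : 0 < ε) (hs : 0 ≤ s) :
    ContDiffAt ℝ m (regPow q ε) s :=
  (contDiffAt_id.pow _).mul
    (ContDiffAt.rpow_const_of_ne (by fun_prop) (by positivity : s + ε ≠ 0))

lemma mul_regPow_le_mul_deriv (hε : 0 < ε) (hs : 0 ≤ s) :
    q * regPow q ε s ≤ s * deriv (regPow q ε) s := by
  set k := ⌈q⌉₊ with hk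
  have hsε : 0 < s + ε := by positivity
  have hshift : HasDerivAt (fun x => (x + ε) ^ (q - k)) ((q - k) * (s + ε) ^ (q - k - 1)) s := by
    simpa using ((hasDerivAt_id s).add_const ε).rpow_const (p := q - k) (Or.inl hsε.ne')
  have hderiv : HasDerivAt (regPow q ε)
      (k * s ^ (k - 1) * (s + ε) ^ (q - k) + s ^ k * ((q - k) * (s + ε) ^ (q - k - 1))) s :=
    (hasDerivAt_pow k s).fun_mul hshift
  have hpow : s * (k * s ^ (k - 1)) = k * s ^ k := by
    rcases k with _ | k
    · simp
    · simp [pow_succ]; ring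
  have hexp : (s + ε) ^ (q - k - 1) * (s + ε) = (s + ε) ^ (q - k) := by
    rw [← Real.rpow_add_one hsε.ne', sub_add_cancel]
  have hkq : 0 ≤ (k : ℝ) - q := sub_nonneg.2 (Nat.le_ceil q)
  have hgap : 0 ≤ s ^ k * (s + ε) ^ (q - k - 1) * ((k - q) * ε) := by positivity
  rw [hderiv.deriv, regPow, ← hk, ← hexp]
  linear_combination hgap - (s + ε) ^ (q - k - 1) * (s + ε) * hpow

lemma regPow_le_rpow (hε : 0 ≤ ε) (hs : 0 < s) : regPow q ε s ≤ s ^ q := by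
  calc regPow q ε s ≤ s ^ ⌈q⌉₊ * s ^ (q - ⌈q⌉₊) := by
        refine mul_le_mul_of_nonneg_left ?_ (by positivity)
        exact Real.rpow_le_rpow_of_nonpos hs (by linarith) (sub_nonpos.2 (Nat.le_ceil q))
    _ = s ^ q := by rw [← Real.rpow_natCast, ← Real.rpow_add hs, add_sub_cancel]

lemma tendsto_regPow (hs : 0 < s) :
    Filter.Tendsto (fun ε => regPow q ε s) (nhds 0) (nhds (s ^ q)) := by
  have h0 : s ^ q = s ^ ⌈q⌉₊ * (s + 0) ^ (q - ⌈q⌉₊) := by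
    rw [add_zero, ← Real.rpow_natCast, ← Real.rpow_add hs, add_sub_cancel]
  rw [h0]
  refine tendsto_const_nhds.mul (Filter.Tendsto.rpow_const ?_ (Or.inl (by positivity)))
  exact tendsto_const_nhds.add Filter.tendsto_id

lemma sq_rpow_half_mul_self (hz : 0 < z) : (z ^ 2) ^ ((p - 2) / 2) * z = z ^ (p - 1) := by
  rw [← Real.rpow_natCast, ← Real.rpow_mul hz.le, ← Real.rpow_add_one hz.ne']
  congr 1
  push_cast
  ring

lemma regPow_sq_mul_le (hp : 1 < p) (hε : 0 ≤ ε) (hz : 0 ≤ z) :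
    regPow ((p - 2) / 2) ε (z ^ 2) * z ≤ z ^ (p - 1) := by
  rcases hz.eq_or_lt with rfl | hz
  · simp [Real.zero_rpow (by linarith : p - 1 ≠ 0)]
  · rw [← sq_rpow_half_mul_self hz]
    gcongr
    exact regPow_le_rpow hε (by positivity)

lemma regPow_sq_mul_sq_le (hp : 1 < p) (hε : 0 ≤ ε) (hz : 0 ≤ z) :
    regPow ((p - 2) / 2) ε (z ^ 2) * z ^ 2 ≤ z ^ p := by
  calc regPow ((p - 2) / 2) ε (z ^ 2) * z ^ 2
      = regPow ((p - 2) / 2) ε (z ^ 2) * z * z := by ring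
    _ ≤ z ^ (p - 1) * z := by gcongr; exact regPow_sq_mul_le hp hε hz
    _ = z ^ p := by
        rw [← Real.rpow_add_one' hz (by linarith), sub_add_cancel]

lemma regPow_sq_mul_rpow_le (hp : 1 < p) (hε : 0 ≤ ε) (hz : 0 ≤ z) :
    (regPow ((p - 2) / 2) ε (z ^ 2) * z) ^ (p / (p - 1)) ≤
      regPow ((p - 2) / 2) ε (z ^ 2) * z ^ 2 := by
  have hp1 : 0 < p - 1 := by linarith
  set b := regPow ((p - 2) / 2) ε (z ^ 2) * z with hb
  have hb0 : 0 ≤ b := mul_nonneg (regPow_nonneg hε (sq_nonneg z)) hz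
  calc b ^ (p / (p - 1)) = b ^ (p - 1)⁻¹ * b := by
        rw [← Real.rpow_add_one' hb0 (by positivity)]; congr 1; field_simp; ring
    _ ≤ (z ^ (p - 1)) ^ (p - 1)⁻¹ * b := by
        gcongr; exact regPow_sq_mul_le hp hε hz
    _ = z * b := by rw [Real.rpow_rpow_inv hz hp1.ne']
    _ = regPow ((p - 2) / 2) ε (z ^ 2) * z ^ 2 := by rw [hb]; ring

lemma tendsto_regPow_sq_mul_sq (hp : 0 < p) (hz : 0 ≤ z) :
    Filter.Tendsto (fun ε => regPow ((p - 2) / 2) ε (z ^ 2) * z ^ 2) (nhds 0) (nhds (z ^ p)) := by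
  rcases hz.eq_or_lt with rfl | hz
  · simp [Real.zero_rpow hp.ne']
  · have h : z ^ p = (z ^ 2) ^ ((p - 2) / 2) * z ^ 2 := by
      rw [sq z, ← mul_assoc, ← sq, sq_rpow_half_mul_self hz, ← Real.rpow_add_one hz.ne',
        sub_add_cancel]
    rw [h]
    exact (tendsto_regPow (by positivity)).mul_const _

lemma gaugeWeight_nonneg (hp : 1 ≤ p) (hr : 0 ≤ r) (hrR : r ≤ R) : 0 ≤ gaugeWeight p R r := by
  have := sub_nonneg.2 hp
  have := sub_nonneg.2 hrR
  unfold gaugeWeight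
  positivity

lemma contDiffAt_gaugeWeight {m : WithTop ℕ∞} (hr : 0 < r) (hrR : r < R) :
    ContDiffAt ℝ m (gaugeWeight p R) r :=
  (contDiffAt_const.mul (contDiffAt_id.rpow_const_of_ne hr.ne')).mul
    (ContDiffAt.rpow_const_of_ne (by fun_prop) (sub_pos.2 hrR).ne')

lemma mul_deriv_gaugeWeight (hp : 1 < p) (hr : 0 < r) (hrR : r < R) :
    r * deriv (gaugeWeight p R) r =
      p * ((p - 1) / p) ^ p * (r * (R - r)) ^ (-p) - (p + 1) * gaugeWeight p R r := by
  have hp1 : 0 < p - 1 := by linarith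
  have hRr : 0 < R - r := sub_pos.2 hrR
  have hpow : HasDerivAt (fun x => (R - x) ^ (1 - p)) ((p - 1) * (R - r) ^ (-p)) r := by
    simpa using ((hasDerivAt_id r).const_sub R).rpow_const (p := 1 - p) (Or.inl hRr.ne')
  have hderiv : HasDerivAt (gaugeWeight p R)
      (((p - 1) / p) ^ (p - 1) * ((-1 - p) * r ^ (-1 - p - 1)) * (R - r) ^ (1 - p) +
        ((p - 1) / p) ^ (p - 1) * r ^ (-1 - p) * ((p - 1) * (R - r) ^ (-p))) r :=
    ((Real.hasDerivAt_rpow_const (Or.inl hr.ne')).const_mul _).fun_mul hpow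
  have hr1 : r * r ^ (-1 - p - 1) = r ^ (-1 - p) := by
    rw [mul_comm, ← Real.rpow_add_one hr.ne', sub_add_cancel]
  have hr2 : r * r ^ (-1 - p) = r ^ (-p) := by
    rw [mul_comm, ← Real.rpow_add_one hr.ne']; congr 1; ring
  have hc : p * ((p - 1) / p) ^ p = (p - 1) * ((p - 1) / p) ^ (p - 1) := by
    rw [Real.rpow_sub_one (by positivity)]; field_simp
  rw [hderiv.deriv, Real.mul_rpow hr.le hRr.le, ← hr2, hc, gaugeWeight, ← hr1]
  ring

lemma gaugeWeight_mul_sq (hr : 0 < r) (hrR : r ≤ R) :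
    gaugeWeight p R r * r ^ 2 = ((p - 1) / p) ^ (p - 1) * (r * (R - r)) ^ (1 - p) := by
  have h : r ^ (-1 - p) * r ^ 2 = r ^ (1 - p) := by
    rw [← Real.rpow_natCast r 2, ← Real.rpow_add hr]
    norm_num
    ring_nf
  rw [Real.mul_rpow hr.le (sub_nonneg.2 hrR), gaugeWeight, ← h]
  ring

lemma gaugeWeight_mul_sq_rpow (hp : 1 < p) (hr : 0 < r) (hrR : r ≤ R) :
    (gaugeWeight p R r * r ^ 2) ^ (p / (p - 1)) =
      ((p - 1) / p) ^ p * (r * (R - r)) ^ (-p) := by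
  have hp1 : 0 < p - 1 := by linarith
  have hc : 0 ≤ (p - 1) / p := by positivity
  have hrR' : 0 ≤ r * (R - r) := mul_nonneg hr.le (sub_nonneg.2 hrR)
  rw [gaugeWeight_mul_sq hr hrR, Real.mul_rpow (by positivity) (by positivity),
    ← Real.rpow_mul hc, ← Real.rpow_mul hrR']
  congr 2 <;> field_simp
  ring

end Profiles

/-! ### The Hardy inequality on the punctured gauge ball -/

section PuncturedBall

/-- The punctured gauge ball `𝓑_R \ {0}`. -/
def puncturedBall (n : ℕ) (R : ℝ) : Set (Heis n) := {ξ : Heis n | dH ξ < R} \ {0}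

/-- The regularized Hardy vector field: as `ε → 0` it tends to
`((p - 1) / p)^(p-1) |z|^(p-2) d^(2-p) (R - d)^(1-p) ∇_H d`. -/
def hardyField {n : ℕ} (p R ε : ℝ) (ξ : Heis n) : (Fin n → ℝ) × (Fin n → ℝ) :=
  (regPow ((p - 2) / 2) ε (zNorm ξ ^ 2) * gaugeWeight p R (dH ξ)) • gaugeField ξ

/-- The weight of the Hardy inequality certified by `hardyField`. -/
def hardyWeight {n : ℕ} (p R ε : ℝ) (ξ : Heis n) : ℝ :=
  ((p - 1) / p) ^ p *
    (regPow ((p - 2) / 2) ε (zNorm ξ ^ 2) * zNorm ξ ^ 2 * (dH ξ * (R - dH ξ)) ^ (-p))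

variable {n : ℕ} {p R ε : ℝ} {ξ : Heis n}

lemma isOpen_puncturedBall : IsOpen (puncturedBall n R) :=
  (isOpen_lt continuous_dH continuous_const).sdiff isClosed_singleton

lemma dH_mul_sub_pos (hξ : ξ ∈ puncturedBall n R) : 0 < dH ξ * (R - dH ξ) :=
  mul_pos (dH_pos hξ.2) (sub_pos.2 hξ.1)

lemma contDiffOn_hardyField (hε : 0 < ε) :
    ContDiffOn ℝ 1 (hardyField (n := n) p R ε) (puncturedBall n R) := fun ξ hξ =>
  have hz : ContDiffAt ℝ 1 (fun η : Heis n => regPow ((p - 2) / 2) ε (zNorm η ^ 2)) ξ :=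
    (contDiffAt_regPow hε (sq_nonneg _)).fun_comp ξ contDiff_zNorm_sq.contDiffAt
  have hd : ContDiffAt ℝ 1 (fun η : Heis n => gaugeWeight p R (dH η)) ξ :=
    (contDiffAt_gaugeWeight (dH_pos hξ.2) hξ.1).fun_comp ξ (contDiffAt_dH hξ.2)
  ((hz.mul hd).smul contDiff_gaugeField.contDiffAt).contDiffWithinAt

lemma continuousOn_dH_mul_sub_rpow (s : ℝ) :
    ContinuousOn (fun ξ : Heis n => (dH ξ * (R - dH ξ)) ^ s) (puncturedBall n R) :=
  ContinuousOn.rpow_const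
    (continuous_dH.mul (continuous_const.sub continuous_dH)).continuousOn
    fun _ hξ => Or.inl (dH_mul_sub_pos hξ).ne'

lemma continuousOn_hardyWeight (hε : 0 < ε) :
    ContinuousOn (hardyWeight (n := n) p R ε) (puncturedBall n R) := by
  have hz : Continuous fun η : Heis n => regPow ((p - 2) / 2) ε (zNorm η ^ 2) := by
    refine continuous_iff_continuousAt.2 fun ξ => ?_
    exact (contDiffAt_regPow (m := 0) hε (sq_nonneg _)).continuousAt.comp
      (f := fun η : Heis n => zNorm η ^ 2) (continuous_zNorm.pow 2).continuousAt
  exact continuousOn_const.mul ((hz.mul (continuous_zNorm.pow 2)).continuousOn.mul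
    (continuousOn_dH_mul_sub_rpow _))

lemma mul_hardyWeight_le_hDiv_hardyField (hp : 1 < p) (hε : 0 < ε)
    (hξ : ξ ∈ puncturedBall n R) :
    p * hardyWeight p R ε ξ ≤ hDiv (hardyField p R ε) ξ := by
  have hd := dH_pos hξ.2
  have hA := contDiffAt_regPow (q := (p - 2) / 2) (m := 1) hε (sq_nonneg (zNorm ξ))
  have hG := contDiffAt_gaugeWeight (p := p) (m := 1) hd hξ.1
  have hlog := mul_regPow_le_mul_deriv (q := (p - 2) / 2) hε (sq_nonneg (zNorm ξ))
  have hA0 := regPow_nonneg (q := (p - 2) / 2) hε.le (sq_nonneg (zNorm ξ))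
  have hG0 := gaugeWeight_nonneg hp.le hd.le hξ.1.le
  unfold hardyField hardyWeight
  rw [hDiv_radial_smul_gaugeField hξ.2 (hA.differentiableAt one_ne_zero).hasDerivAt
    (hG.differentiableAt one_ne_zero).hasDerivAt, mul_deriv_gaugeWeight hp hd hξ.1]
  set A := regPow ((p - 2) / 2) ε (zNorm ξ ^ 2)
  set G := gaugeWeight p R (dH ξ)
  have hrest : 0 ≤ zNorm ξ ^ 2 * ((2 * n + 1) * (A * G)) := by positivity
  linear_combination hrest + 2 * zNorm ξ ^ 2 * G * hlog

lemma hNorm_hardyField_rpow_le (hp : 1 < p) (hε : 0 ≤ ε) (hξ : ξ ∈ puncturedBall n R) :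
    hNorm (hardyField p R ε ξ) ^ (p / (p - 1)) ≤ hardyWeight p R ε ξ := by
  have hd := dH_pos hξ.2
  have hdR := dH_mul_sub_pos hξ
  have : 0 ≤ (p - 1) / p := div_nonneg (by linarith) (by linarith)
  have hA := regPow_nonneg (q := (p - 2) / 2) hε (sq_nonneg (zNorm ξ))
  have hG := gaugeWeight_nonneg hp.le hd.le hξ.1.le
  have hz := zNorm_nonneg ξ
  have hnorm : hNorm (hardyField p R ε ξ) =
      (regPow ((p - 2) / 2) ε (zNorm ξ ^ 2) * zNorm ξ) *
        (gaugeWeight p R (dH ξ) * dH ξ ^ 2) := by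
    rw [hardyField, hNorm_smul, abs_of_nonneg (by positivity), hNorm_gaugeField]
    ring
  rw [hnorm, Real.mul_rpow (by positivity) (by positivity), gaugeWeight_mul_sq_rpow hp hd hξ.1.le,
    hardyWeight, mul_left_comm]
  gcongr
  exact regPow_sq_mul_rpow_le hp hε hz

lemma hardyWeight_le_hDiv_sub (hp : 1 < p) (hε : 0 < ε) (hξ : ξ ∈ puncturedBall n R) :
    hardyWeight p R ε ξ ≤
      hDiv (hardyField p R ε) ξ - (p - 1) * hNorm (hardyField p R ε ξ) ^ (p / (p - 1)) := by
  have hnorm := mul_le_mul_of_nonneg_left (hNorm_hardyField_rpow_le hp hε.le hξ)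
    (sub_nonneg.2 hp.le)
  linarith [mul_hardyWeight_le_hDiv_hardyField hp hε hξ]

lemma hardyWeight_nonneg (hp : 1 ≤ p) (hε : 0 ≤ ε) (hξ : ξ ∈ puncturedBall n R) :
    0 ≤ hardyWeight p R ε ξ := by
  have := dH_mul_sub_pos hξ
  have := regPow_nonneg (q := (p - 2) / 2) hε (sq_nonneg (zNorm ξ))
  have := sub_nonneg.2 hp
  unfold hardyWeight
  positivity

lemma hardyWeight_le (hp : 1 < p) (hε : 0 ≤ ε) (hξ : ξ ∈ puncturedBall n R) :
    hardyWeight p R ε ξ ≤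
      ((p - 1) / p) ^ p * (zNorm ξ ^ p * (dH ξ * (R - dH ξ)) ^ (-p)) := by
  have := dH_mul_sub_pos hξ
  have : 0 ≤ (p - 1) / p := div_nonneg (by linarith) (by linarith)
  unfold hardyWeight
  gcongr
  exact regPow_sq_mul_sq_le hp hε (zNorm_nonneg ξ)

lemma tendsto_hardyWeight (hp : 0 < p) (ξ : Heis n) :
    Filter.Tendsto (fun ε => hardyWeight p R ε ξ) (nhds 0)
      (nhds (((p - 1) / p) ^ p * (zNorm ξ ^ p * (dH ξ * (R - dH ξ)) ^ (-p)))) :=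
  ((tendsto_regPow_sq_mul_sq hp (zNorm_nonneg ξ)).mul_const _).const_mul _

variable {f : Heis n → ℝ}

lemma integral_hardyWeight_mul_abs_rpow_le (hp : 1 < p) (hε : 0 < ε) (hf : ContDiff ℝ 1 f)
    (hfc : HasCompactSupport f) (hfs : tsupport f ⊆ puncturedBall n R) :
    ∫ ξ in puncturedBall n R, hardyWeight p R ε ξ * |f ξ| ^ p ≤
      ∫ ξ in puncturedBall n R, hNorm (hGrad f ξ) ^ p :=
  integral_mul_abs_rpow_le_of_le_hDiv_sub hp isOpen_puncturedBall (contDiffOn_hardyField hε)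
    (continuousOn_hardyWeight hε) (fun _ => hardyWeight_le_hDiv_sub hp hε) hf hfc hfs

lemma tendsto_integral_hardyWeight_mul_abs_rpow (hp : 1 < p) (hf : Continuous f)
    (hfc : HasCompactSupport f) (hfs : tsupport f ⊆ puncturedBall n R) :
    Filter.Tendsto (fun ε => ∫ ξ in puncturedBall n R, hardyWeight p R ε ξ * |f ξ| ^ p)
      (nhdsWithin 0 (Set.Ioi 0))
      (nhds (∫ ξ in puncturedBall n R,
        ((p - 1) / p) ^ p * (zNorm ξ ^ p * (dH ξ * (R - dH ξ)) ^ (-p)) * |f ξ| ^ p)) := by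
  have hp0 : 0 < p := by linarith
  have hΩ : IsOpen (puncturedBall n R) := isOpen_puncturedBall
  have hlimit : ContinuousOn (fun ξ : Heis n =>
      ((p - 1) / p) ^ p * (zNorm ξ ^ p * (dH ξ * (R - dH ξ)) ^ (-p))) (puncturedBall n R) :=
    continuousOn_const.mul ((continuous_zNorm.rpow_const
      fun _ => Or.inr hp0.le).continuousOn.mul (continuousOn_dH_mul_sub_rpow _))
  refine tendsto_integral_filter_of_dominated_convergence _ ?_ ?_
    (integrable_mul_abs_rpow hp0 hΩ hlimit hf hfc hfs).integrableOn ?_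
  · filter_upwards [self_mem_nhdsWithin] with ε hε
    exact (integrable_mul_abs_rpow hp0 hΩ (continuousOn_hardyWeight hε) hf hfc
      hfs).aestronglyMeasurable.restrict
  · filter_upwards [self_mem_nhdsWithin] with ε hε
    filter_upwards [ae_restrict_mem hΩ.measurableSet] with ξ hξ
    have := hardyWeight_nonneg hp.le (le_of_lt hε) hξ
    rw [Real.norm_of_nonneg (by positivity)]
    gcongr
    exact hardyWeight_le hp (le_of_lt hε) hξ
  · filter_upwards with ξ
    exact ((tendsto_hardyWeight hp0 ξ).mul_const _).mono_left nhdsWithin_le_nhds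

theorem hardy_punctured_ball_Heisenberg_general (hp : 1 < p) (hf : ContDiff ℝ 1 f)
    (hfc : HasCompactSupport f) (hfs : tsupport f ⊆ {ξ : Heis n | dH ξ < R} \ {0}) :
    ((p - 1) / p) ^ p *
        ∫ ξ in {ξ : Heis n | dH ξ < R} \ {0},
          zNorm ξ ^ p / dH ξ ^ p * (|f ξ| ^ p / (R - dH ξ) ^ p) ≤
      ∫ ξ in {ξ : Heis n | dH ξ < R} \ {0}, hNorm (hGrad f ξ) ^ p := by
  rw [← puncturedBall] at hfs ⊢
  have hweight : ∀ ξ ∈ puncturedBall n R,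
      ((p - 1) / p) ^ p * (zNorm ξ ^ p / dH ξ ^ p * (|f ξ| ^ p / (R - dH ξ) ^ p)) =
        ((p - 1) / p) ^ p * (zNorm ξ ^ p * (dH ξ * (R - dH ξ)) ^ (-p)) * |f ξ| ^ p := by
    intro ξ hξ
    rw [Real.rpow_neg (dH_mul_sub_pos hξ).le,
      Real.mul_rpow (dH_nonneg ξ) (sub_nonneg.2 hξ.1.le)]
    ring
  rw [← integral_const_mul, setIntegral_congr_fun isOpen_puncturedBall.measurableSet hweight]
  refine le_of_tendsto (tendsto_integral_hardyWeight_mul_abs_rpow hp hf.continuous hfc hfs) ?_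
  filter_upwards [self_mem_nhdsWithin] with ε hε
  exact integral_hardyWeight_mul_abs_rpow_le hp hε hf hfc hfs

end PuncturedBall

/-- Example 4.5: weighted Hardy inequality on the punctured
Heisenberg ball `Ω = 𝓑_R \ {0}` with distance weight `R − d`. -/
theorem hardy_punctured_ball_Heisenberg
    (n : ℕ) (p R : ℝ) (hp : 1 < p) (hR : 0 < R)
    (f : Heis n → ℝ) (hf : ContDiff ℝ (⊤ : ℕ∞) f) (hfc : HasCompactSupport f)
    (hfs : tsupport f ⊆ {ξ : Heis n | dH ξ < R} \ {0}) :
    ((p - 1) / p) ^ p *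
        ∫ ξ in {ξ : Heis n | dH ξ < R} \ {0},
          zNorm ξ ^ p / dH ξ ^ p * (|f ξ| ^ p / (R - dH ξ) ^ p) ≤
      ∫ ξ in {ξ : Heis n | dH ξ < R} \ {0}, hNorm (hGrad f ξ) ^ p :=
  hardy_punctured_ball_Heisenberg_general hp (hf.of_le (by exact_mod_cast le_top)) hfc hfs
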